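/- arXiv:1201.1633 — 6 statements merged into one kernel-verified Lean document; each statement's English description precedes it below -/
import Mathlib

section
/- Let d : Σ* × Σ* → ℤ≥0 be a mapping whose restriction to Σ_n × Σ_n is a metric for every n ≥ 0, and suppose that (1) d(u,v) ≤ n for all words u, v with l(u) = l(v) = n, and (2) d(u₁v₁, u₂v₂) = d(u₁,u₂) + d(v₁,v₂) whenever l(u₁) = l(u₂) and l(v₁) = l(v₂) (where juxtaposition denotes concatenation). Then d(u,v) = H(u,v) for all words u, v of equal length, where H is the Hamming distance. -/
/-- The Hamming distance between two words of equal length: the number of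
positions at which they differ (computed via `zip`, which truncates to the
common length, so this is also the truncated Hamming function). -/
def hamming {α : Type*} [DecidableEq α] (u v : List α) : ℕ :=
  (u.zip v).countP (fun p => decide (p.1 ≠ p.2))

/-- Condition (2) of the paper: additivity under blockwise concatenation. The two words may be over
different alphabets, and nothing is required of blocks of different lengths. -/
def IsConcatAdditive {A B M : Type*} [Add M] (d : List A → List B → M) : Prop :=
  ∀ (u₁ : List A) (u₂ : List B) (v₁ : List A) (v₂ : List B),
    u₁.length = u₂.length → v₁.length = v₂.length →
      d (u₁ ++ v₁) (u₂ ++ v₂) = d u₁ u₂ + d v₁ v₂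

namespace IsConcatAdditive

section Add

variable {A B M : Type*} [Add M] {d : List A → List B → M}

theorem map_cons (hd : IsConcatAdditive d) (a : A) (b : B) {u : List A} {v : List B}
    (huv : u.length = v.length) : d (a :: u) (b :: v) = d [a] [b] + d u v :=
  hd [a] [b] u v rfl huv

end Add

section AddLeftCancelMonoid

variable {A B M : Type*} [AddLeftCancelMonoid M] {d e : List A → List B → M}

theorem map_nil (hd : IsConcatAdditive d) : d [] [] = 0 :=
  left_eq_add.mp (hd [] [] [] [] rfl rfl)

theorem eq_of_forall_singleton_eq (hd : IsConcatAdditive d) (he : IsConcatAdditive e)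
    (h : ∀ a b, d [a] [b] = e [a] [b]) :
    ∀ {u : List A} {v : List B}, u.length = v.length → d u v = e u v
  | [], [], _ => by rw [hd.map_nil, he.map_nil]
  | a :: u, b :: v, huv => by
    have htail : u.length = v.length := Nat.succ.inj huv
    rw [hd.map_cons a b htail, he.map_cons a b htail, h,
      eq_of_forall_singleton_eq hd he h htail]

end AddLeftCancelMonoid

end IsConcatAdditive

section Hamming

variable {A : Type*} [DecidableEq A]

theorem hamming_singleton (a b : A) : hamming [a] [b] = if a = b then 0 else 1 := by
  simp [hamming, List.countP_singleton]

theorem isConcatAdditive_hamming : IsConcatAdditive (hamming (α := A)) := by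
  intro u₁ u₂ v₁ v₂ hu _
  rw [hamming, List.zip_append hu, List.countP_append, hamming, hamming]

end Hamming

theorem stmt_0_general {A : Type*} [DecidableEq A] {d : List A → List A → ℕ}
    (hzero : ∀ a b, d [a] [b] = 0 ↔ a = b) (hle : ∀ a b, d [a] [b] ≤ 1)
    (hadd : IsConcatAdditive d) {u v : List A} (huv : u.length = v.length) :
    d u v = hamming u v := by
  refine hadd.eq_of_forall_singleton_eq isConcatAdditive_hamming (fun a b => ?_) huv
  rw [hamming_singleton]
  split_ifs with hab
  · exact (hzero a b).mpr hab
  · have hpos : 0 < d [a] [b] := Nat.pos_of_ne_zero (mt (hzero a b).mp hab)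
    exact le_antisymm (hle a b) hpos

theorem stmt_0 {A : Type*} [DecidableEq A]
    (d : List A → List A → ℕ)
    (hrefl : ∀ u v : List A, u.length = v.length → (d u v = 0 ↔ u = v))
    (hsymm : ∀ u v : List A, u.length = v.length → d u v = d v u)
    (htri : ∀ u v w : List A, u.length = v.length → v.length = w.length →
      d u w ≤ d u v + d v w)
    (hbound : ∀ u v : List A, u.length = v.length → d u v ≤ u.length)
    (hadd : ∀ u₁ u₂ v₁ v₂ : List A, u₁.length = u₂.length → v₁.length = v₂.length →
      d (u₁ ++ v₁) (u₂ ++ v₂) = d u₁ u₂ + d v₁ v₂) :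
    ∀ u v : List A, u.length = v.length → d u v = hamming u v :=
  fun _ _ => stmt_0_general (fun a b => by simpa only [List.singleton_inj] using hrefl [a] [b] rfl)
    (fun a b => hbound [a] [b] rfl) hadd
end

section
/- The function T(u,v) := H(ū,v̄) + |l(u) − l(v)| is an integer-valued metric on Σ* (i.e., T(u,v) = 0 iff u = v, T is symmetric, and T satisfies the triangle inequality), and T is Hamming compatible, i.e., T(u,v) = H(u,v) whenever l(u) = l(v). -/
/-- The metric `T(u,v) = H(ū,v̄) + |l(u) − l(v)|`. -/
def Tmet {α : Type*} [DecidableEq α] (u v : List α) : ℕ :=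
  hamming u v + Nat.dist u.length v.length

/-! Pad both words with a blank symbol up to a common length `n`. The padded words differ at a
position below `min (l u) (l v)` exactly when the words do, at every position between the two
lengths, and nowhere after that, so `T(u,v)` is the Hamming distance of the padded words. -/

/-- The word `u` padded with the blank symbol `none` to length `n`, as a function of the position.
It embeds the words of length at most `n` into a product that carries the Hamming metric; letters
of `u` from position `n` on are lost. -/
def blankPad {α : Type*} (n : ℕ) (u : List α) : Fin n → Option α :=
  fun i => u[(i : ℕ)]?

theorem hammingDist_eq_head_add_tail {n : ℕ} {β : Fin (n + 1) → Type*} [∀ i, DecidableEq (β i)]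
    (x y : ∀ i, β i) :
    hammingDist x y =
      (if x 0 ≠ y 0 then 1 else 0) + hammingDist (Fin.tail x) (Fin.tail y) :=
  Fin.card_filter_univ_succ' _

section

variable {α : Type*}

theorem blankPad_inj {n : ℕ} {u v : List α} (hu : u.length ≤ n) (hv : v.length ≤ n) :
    blankPad n u = blankPad n v ↔ u = v := by
  refine ⟨fun h => List.ext_getElem? fun i => ?_, congrArg (blankPad n)⟩
  rcases lt_or_ge i n with hi | hi
  · exact congrFun h ⟨i, hi⟩
  · rw [List.getElem?_eq_none (hu.trans hi), List.getElem?_eq_none (hv.trans hi)]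

theorem blankPad_zero (n : ℕ) (u : List α) : blankPad (n + 1) u 0 = u.head? :=
  List.head?_eq_getElem?.symm

theorem tail_blankPad (n : ℕ) (u : List α) : Fin.tail (blankPad (n + 1) u) = blankPad n u.tail :=
  funext fun _ => List.getElem?_tail.symm

variable [DecidableEq α]

theorem Tmet_eq_head?_add_tail (u v : List α) :
    Tmet u v = (if u.head? ≠ v.head? then 1 else 0) + Tmet u.tail v.tail := by
  cases u <;> cases v
  · simp
  · simp [Tmet, hamming, Nat.dist, add_comm]
  · simp [Tmet, hamming, Nat.dist, add_comm]
  · simp [Tmet, hamming, Nat.dist_succ_succ, List.countP_cons, add_comm, add_left_comm]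

theorem Tmet_eq_hammingDist_blankPad {n : ℕ} {u v : List α}
    (hu : u.length ≤ n) (hv : v.length ≤ n) :
    Tmet u v = hammingDist (blankPad n u) (blankPad n v) := by
  induction n generalizing u v with
  | zero =>
    obtain rfl := List.eq_nil_of_length_eq_zero (Nat.le_zero.mp hu)
    obtain rfl := List.eq_nil_of_length_eq_zero (Nat.le_zero.mp hv)
    simp [Tmet, hamming]
  | succ n ih =>
    have hu' : u.tail.length ≤ n := by simpa using hu
    have hv' : v.tail.length ≤ n := by simpa using hv
    rw [Tmet_eq_head?_add_tail, ih hu' hv', hammingDist_eq_head_add_tail, blankPad_zero,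
      blankPad_zero, tail_blankPad, tail_blankPad]

theorem Tmet_eq_zero_iff {u v : List α} : Tmet u v = 0 ↔ u = v := by
  have hu : u.length ≤ max u.length v.length := le_max_left _ _
  have hv : v.length ≤ max u.length v.length := le_max_right _ _
  rw [Tmet_eq_hammingDist_blankPad hu hv, hammingDist_eq_zero, blankPad_inj hu hv]

theorem Tmet_comm (u v : List α) : Tmet u v = Tmet v u := by
  have hu : u.length ≤ max u.length v.length := le_max_left _ _
  have hv : v.length ≤ max u.length v.length := le_max_right _ _
  rw [Tmet_eq_hammingDist_blankPad hu hv, Tmet_eq_hammingDist_blankPad hv hu, hammingDist_comm]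

theorem Tmet_triangle (u v w : List α) : Tmet u w ≤ Tmet u v + Tmet v w := by
  obtain ⟨n, hu, hv, hw⟩ : ∃ n, u.length ≤ n ∧ v.length ≤ n ∧ w.length ≤ n :=
    ⟨u.length + v.length + w.length, by omega, by omega, by omega⟩
  rw [Tmet_eq_hammingDist_blankPad hu hw, Tmet_eq_hammingDist_blankPad hu hv,
    Tmet_eq_hammingDist_blankPad hv hw]
  exact hammingDist_triangle _ _ _

theorem Tmet_eq_hamming {u v : List α} (h : u.length = v.length) : Tmet u v = hamming u v := by
  rw [Tmet, h, Nat.dist_self, add_zero]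

end

theorem stmt_2 {A : Type*} [DecidableEq A] :
    (∀ u v : List A, Tmet u v = 0 ↔ u = v) ∧
    (∀ u v : List A, Tmet u v = Tmet v u) ∧
    (∀ u v w : List A, Tmet u v ≤ Tmet u w + Tmet w v) ∧
    (∀ u v : List A, u.length = v.length → Tmet u v = hamming u v) :=
  ⟨fun _ _ => Tmet_eq_zero_iff, Tmet_comm, fun u v w => Tmet_triangle u w v,
    fun _ _ => Tmet_eq_hamming⟩
end

section
/- For every integer n ≥ 3, if |Σ| ≥ 2 then the function d_n(u,v) := H(ū,v̄) + ⌈|l(u) − l(v)|/n⌉ is not a metric on Σ*: there exist words u, v, w ∈ Σ* with d_n(u,v) > d_n(u,w) + d_n(w,v). (For distinct letters 0, 1 ∈ Σ one may take w = 0ⁿ, u = 0²ⁿ, v = 0ⁿ1ⁿ0ⁿ, giving d_n(u,v) = n+1, d_n(u,w) = 1, d_n(v,w) = 2.) -/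
/-- The function `d_n(u,v) = H(ū,v̄) + ⌈|l(u) − l(v)|/n⌉`
(for `n ≥ 1`, `⌈m/n⌉ = (m + n - 1)/n` in natural-number division). -/
def dn {α : Type*} [DecidableEq α] (n : ℕ) (u v : List α) : ℕ :=
  hamming u v + (Nat.dist u.length v.length + n - 1) / n

/-!
With `a ≠ b`, the words `aⁿaⁿ` and `aⁿbⁿaⁿ` are at distance `n + 1`, almost all of it coming from
the `n` mismatches in the second block. Passing through their common prefix `aⁿ` erases these
mismatches, and the two changes of length cost only `1 + 2 < n + 1`.
-/

section Hamming

open List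

variable {α : Type*} [DecidableEq α]

theorem hamming_self (u : List α) : hamming u u = 0 := by
  simp [hamming, zip, zipWith_self, countP_map]

theorem hamming_comm (u v : List α) : hamming u v = hamming v u := by
  simp only [hamming, ← zip_swap v u, countP_map, Function.comp_def, Prod.fst_swap, Prod.snd_swap,
    ne_comm]

theorem hamming_append {u v : List α} (h : u.length = v.length) (x y : List α) :
    hamming (u ++ x) (v ++ y) = hamming u v + hamming x y := by
  simp only [hamming, zip_append h, countP_append]

theorem hamming_append_right {u v : List α} (h : u.length ≤ v.length) (x : List α) :
    hamming u (v ++ x) = hamming u v := by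
  rw [hamming, zip_eq_zip_take_min, length_append, min_eq_left (by omega),
    take_append_of_le_length h, hamming, zip_eq_zip_take_min (l₁ := u) (l₂ := v), min_eq_left h]

theorem hamming_replicate_of_ne {a b : α} (hab : a ≠ b) (m n : ℕ) :
    hamming (replicate m a) (replicate n b) = min m n := by
  simp [hamming, countP_replicate, hab]

end Hamming

section Distance

open List

variable {α : Type*} [DecidableEq α] {n k : ℕ}

theorem dn_comm (n : ℕ) (u v : List α) : dn n u v = dn n v u := by
  rw [dn, dn, hamming_comm, Nat.dist_comm]

theorem dn_eq_hamming_add_of_length_eq {u v : List α} (hn : 0 < n)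
    (h : v.length = u.length + n * k) : dn n u v = hamming u v + k := by
  have hdist : Nat.dist u.length v.length = n * k := by
    rw [Nat.dist_eq_sub_of_le (by omega), h, Nat.add_sub_cancel_left]
  rw [dn, hdist, ← Nat.ceilDiv_eq_add_pred_div, ← smul_eq_mul, smul_ceilDiv hn]

theorem dn_append_self {x : List α} (hn : 0 < n) (hx : x.length = n * k) (u : List α) :
    dn n (u ++ x) u = k := by
  rw [dn_comm, dn_eq_hamming_add_of_length_eq hn (by rw [length_append, hx]),
    hamming_append_right le_rfl, hamming_self, zero_add]

theorem dn_replicate_two_mul_append {a b : α} (hn : 0 < n) (hab : a ≠ b) :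
    dn n (replicate (2 * n) a) (replicate n a ++ replicate n b ++ replicate n a) = n + 1 := by
  have hlength : (replicate n a ++ replicate n b ++ replicate n a).length =
      (replicate (2 * n) a).length + n * 1 := by
    simp only [length_append, length_replicate]
    ring
  have hhamming : hamming (replicate (2 * n) a)
      (replicate n a ++ replicate n b ++ replicate n a) = n := by
    rw [hamming_append_right (by simp [two_mul]), two_mul, replicate_add, hamming_append rfl,
      hamming_self, hamming_replicate_of_ne hab, min_self, zero_add]
  rw [dn_eq_hamming_add_of_length_eq hn hlength, hhamming]

theorem dn_replicate_two_mul_replicate (hn : 0 < n) (a : α) :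
    dn n (replicate (2 * n) a) (replicate n a) = 1 := by
  rw [two_mul, replicate_add, dn_append_self hn (by rw [length_replicate, mul_one])]

theorem dn_replicate_append_replicate (hn : 0 < n) (a b : α) :
    dn n (replicate n a ++ replicate n b ++ replicate n a) (replicate n a) = 2 := by
  rw [append_assoc,
    dn_append_self (k := 2) hn (by simp only [length_append, length_replicate, mul_two])]

theorem exists_dn_add_dn_lt_dn [Nontrivial α] (hn : 3 ≤ n) :
    ∃ u v w : List α, dn n u w + dn n w v < dn n u v := by
  have hpos : 0 < n := by omega
  obtain ⟨a, b, hab⟩ := exists_pair_ne α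
  refine ⟨replicate (2 * n) a, replicate n a ++ replicate n b ++ replicate n a,
    replicate n a, ?_⟩
  rw [dn_comm n (replicate n a), dn_replicate_two_mul_append hpos hab,
    dn_replicate_two_mul_replicate hpos, dn_replicate_append_replicate hpos]
  omega

end Distance

theorem stmt_3_general {A : Type*} [DecidableEq A] [Nontrivial A] (n : ℕ) (hn : 3 ≤ n) :
    (∃ u v w : List A, dn n u w + dn n w v < dn n u v) ∧
    ∀ a b : A, a ≠ b →
      dn n (List.replicate (2 * n) a)
        (List.replicate n a ++ List.replicate n b ++ List.replicate n a) = n + 1 ∧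
      dn n (List.replicate (2 * n) a) (List.replicate n a) = 1 ∧
      dn n (List.replicate n a ++ List.replicate n b ++ List.replicate n a)
        (List.replicate n a) = 2 := by
  have hpos : 0 < n := by omega
  exact ⟨exists_dn_add_dn_lt_dn hn, fun a b hab =>
    ⟨dn_replicate_two_mul_append hpos hab, dn_replicate_two_mul_replicate hpos a,
      dn_replicate_append_replicate hpos a b⟩⟩

theorem stmt_3 {A : Type*} [DecidableEq A] [Fintype A]
    (hA : 2 ≤ Fintype.card A) (n : ℕ) (hn : 3 ≤ n) :
    (∃ u v w : List A, dn n u w + dn n w v < dn n u v) ∧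
    ∀ a b : A, a ≠ b →
      dn n (List.replicate (2 * n) a)
        (List.replicate n a ++ List.replicate n b ++ List.replicate n a) = n + 1 ∧
      dn n (List.replicate (2 * n) a) (List.replicate n a) = 1 ∧
      dn n (List.replicate n a ++ List.replicate n b ++ List.replicate n a)
        (List.replicate n a) = 2 := by
  have : Nontrivial A := Fintype.one_lt_card_iff_nontrivial.mp hA
  exact stmt_3_general n hn
end

section
/- Let u be a word of length k over an alphabet Σ with N letters, let r ≥ 0, let j ≤ k, and set a = ⌈(k − j)/2⌉. If a ≤ r, then the cardinality of S_r^j(u) = {v ∈ Σ_j : d_2(u,v) = r} equals C(j, r − a)·(N − 1)^{r − a}, where C(j, r − a) is the binomial coefficient. -/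
/-- The metric `d₂(u,v) = H(ū,v̄) + ⌈|l(u) − l(v)|/2⌉`
(note `⌈m/2⌉ = (m + 1)/2` in natural-number division). -/
def d2 {α : Type*} [DecidableEq α] (u v : List α) : ℕ :=
  hamming u v + (Nat.dist u.length v.length + 1) / 2

/-!
Once the set of positions at which a word differs from the first `j` letters of `u` is fixed, each
of those positions leaves `N - 1` choices and every other position leaves one. There are
`C(j, m)` sets of `m` positions, so `C(j, m) * (N - 1) ^ m` words of length `j` have truncated
Hamming distance `m` from `u`. Since `⌈|l(u) - l(v)|/2⌉` is the constant `a` on words `v` of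
length `j`, the sphere of radius `r` for `d₂` is the Hamming sphere of radius `m = r - a`.
-/

open Finset

section HammingSphere

variable {ι : Type*} [Fintype ι] [DecidableEq ι]

theorem card_filter_filter_ne_eq {β : ι → Type*} [∀ i, DecidableEq (β i)]
    [∀ i, Fintype (β i)] (x : ∀ i, β i) (s : Finset ι) :
    #{y : ∀ i, β i | ({i | x i ≠ y i} : Finset ι) = s} =
      ∏ i ∈ s, (Fintype.card (β i) - 1) := by
  have fiber_eq_pi : ({y | ({i | x i ≠ y i} : Finset ι) = s} : Finset (∀ i, β i)) =
      Fintype.piFinset fun i => if i ∈ s then {x i}ᶜ else {x i} := by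
    ext y
    simp only [mem_filter_univ, Fintype.mem_piFinset, Finset.ext_iff]
    refine forall_congr' fun i => ?_
    by_cases hi : i ∈ s <;> simp [hi, eq_comm]
  rw [fiber_eq_pi, Fintype.card_piFinset, ← prod_ite_mem_eq s]
  refine Fintype.prod_congr _ _ fun i => ?_
  split_ifs
  · rw [card_compl, card_singleton]
  · exact card_singleton _

theorem card_filter_hammingDist_eq_sum_prod {β : ι → Type*} [∀ i, DecidableEq (β i)]
    [∀ i, Fintype (β i)] (x : ∀ i, β i) (m : ℕ) :
    #{y : ∀ i, β i | hammingDist x y = m} =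
      ∑ s ∈ powersetCard m univ, ∏ i ∈ s, (Fintype.card (β i) - 1) := by
  rw [card_eq_sum_card_fiberwise (f := fun y => ({i | x i ≠ y i} : Finset ι))
    (t := powersetCard m univ)]
  · refine sum_congr rfl fun s hs => ?_
    rw [← card_filter_filter_ne_eq x s, filter_filter]
    congr 1
    refine filter_congr fun y _ => and_iff_right_of_imp ?_
    rintro rfl
    exact mem_powersetCard_univ.1 hs
  · exact fun y hy => mem_powersetCard_univ.2 ((mem_filter_univ y).1 hy)

theorem card_filter_hammingDist_eq {α : Type*} [DecidableEq α] [Fintype α]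
    (x : ι → α) (m : ℕ) :
    #{y : ι → α | hammingDist x y = m} =
      (Fintype.card ι).choose m * (Fintype.card α - 1) ^ m := by
  rw [card_filter_hammingDist_eq_sum_prod]
  simp only [prod_const]
  rw [sum_powersetCard m univ fun i => (Fintype.card α - 1) ^ i, card_univ, smul_eq_mul]

end HammingSphere

section Words

variable {α : Type*} {n : ℕ}

theorem countP_ofFn (p : α → Bool) (f : Fin n → α) :
    (List.ofFn f).countP p = #{i | p (f i)} := by
  rw [List.ofFn_eq_map, List.countP_map, ← List.toFinset_finRange,
    (List.nodup_finRange n).card_eq_countP]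
  simp only [Function.comp_def, Bool.decide_eq_true]

theorem zip_ofFn_right {β : Type*} (u : List α) (hn : n ≤ u.length) (g : Fin n → β) :
    u.zip (List.ofFn g) = List.ofFn fun i : Fin n => (u[i], g i) :=
  List.ext_getElem (by simpa) fun i _ _ => by simp

theorem range_ofFn : Set.range (List.ofFn : (Fin n → α) → List α) = {v | v.length = n} := by
  ext v
  constructor
  · rintro ⟨f, rfl⟩
    exact List.length_ofFn
  · rintro rfl
    exact ⟨v.get, List.ofFn_get v⟩

theorem ncard_setOf_length_eq_and (P : List α → Prop) :
    {v : List α | v.length = n ∧ P v}.ncard = {f : Fin n → α | P (List.ofFn f)}.ncard := by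
  have image_eq : List.ofFn '' {f : Fin n → α | P (List.ofFn f)} =
      {v | v.length = n ∧ P v} := by
    rw [Set.ofPred_and, ← range_ofFn, Set.inter_comm]
    exact Set.image_preimage_eq_inter_range
  rw [← image_eq, Set.ncard_image_of_injective _ List.ofFn_injective]

variable [DecidableEq α]

theorem hamming_ofFn_right (u : List α) (hn : n ≤ u.length) (g : Fin n → α) :
    hamming u (List.ofFn g) = hammingDist (fun i : Fin n => u[i]) g := by
  rw [hamming, zip_ofFn_right u hn, countP_ofFn, hammingDist]
  simp only [decide_eq_true_eq]

theorem ncard_setOf_length_eq_and_hamming_eq [Fintype α] (u : List α) (hn : n ≤ u.length)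
    (m : ℕ) :
    {v : List α | v.length = n ∧ hamming u v = m}.ncard =
      n.choose m * (Fintype.card α - 1) ^ m := by
  rw [ncard_setOf_length_eq_and]
  simp only [hamming_ofFn_right u hn]
  rw [← coe_filter_univ, Set.ncard_coe_finset, card_filter_hammingDist_eq, Fintype.card_fin]

theorem d2_eq_iff_hamming_eq {u v : List α} {r : ℕ}
    (hr : (Nat.dist u.length v.length + 1) / 2 ≤ r) :
    d2 u v = r ↔ hamming u v = r - (Nat.dist u.length v.length + 1) / 2 := by
  rw [d2]
  omega

end Words

theorem stmt_7 {A : Type*} [DecidableEq A] [Fintype A]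
    (u : List A) (k r j a : ℕ) (hk : u.length = k) (hj : j ≤ k)
    (ha : a = (k - j + 1) / 2) (har : a ≤ r) :
    {v : List A | v.length = j ∧ d2 u v = r}.ncard =
      Nat.choose j (r - a) * (Fintype.card A - 1) ^ (r - a) := by
  subst hk
  rw [← Nat.dist_eq_sub_of_le_right hj] at ha
  subst ha
  have sphere_eq : {v : List A | v.length = j ∧ d2 u v = r} =
      {v | v.length = j ∧ hamming u v = r - (Nat.dist u.length j + 1) / 2} := by
    ext v
    refine and_congr_right ?_
    rintro rfl
    exact d2_eq_iff_hamming_eq har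
  rw [sphere_eq, ncard_setOf_length_eq_and_hamming_eq u hj]
end

section
/- Let u be a word of length k over an alphabet Σ with N letters, let r ≥ 0, let j > k, and set a = ⌈(j − k)/2⌉. If a ≤ r, then the cardinality of S_r^j(u) = {v ∈ Σ_j : d_2(u,v) = r} equals C(k, r − a)·(N − 1)^{r − a}·N^{j − k}, where C(k, r − a) is the binomial coefficient. -/
/-!
Prescribing the first letter of `v` gives a recursion for the number of words of length `n` at
truncated Hamming distance `s` from `u`: the matching letter leaves the distance `s`, each of the
other `N - 1` letters leaves `s - 1`, and this is Pascal's rule. Once `u` is exhausted, the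
remaining letters of `v` are free. On words of a fixed length `j`, the distance `d2 u` is
`hamming u` plus the constant `⌈|l(u) - j|/2⌉`.
-/

section Hamming

variable {α : Type*} [DecidableEq α]

theorem hamming_nil_left (v : List α) : hamming [] v = 0 := rfl

theorem hamming_nil_right (u : List α) : hamming u [] = 0 := by
  simp [hamming]

theorem hamming_cons_cons_self (x : α) (u v : List α) :
    hamming (x :: u) (x :: v) = hamming u v := by
  simp [hamming]

theorem hamming_cons_cons_of_ne {x y : α} (h : x ≠ y) (u v : List α) :
    hamming (x :: u) (y :: v) = hamming u v + 1 := by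
  simp [hamming, h]

/-- The sphere of radius `s` around `u`, for the truncated Hamming function, among the words of
length `n`; the center `u` may have any length. -/
def hammingSphere (u : List α) (n s : ℕ) : Set (List α) :=
  {v | v.length = n ∧ hamming u v = s}

theorem finite_hammingSphere [Finite α] (u : List α) (n s : ℕ) : (hammingSphere u n s).Finite :=
  (List.finite_length_eq α n).subset fun _ hv => hv.1

theorem hammingSphere_nil_zero (n : ℕ) : hammingSphere ([] : List α) n 0 = {v | v.length = n} := by
  simp [hammingSphere, hamming_nil_left]

theorem hammingSphere_nil_succ (n s : ℕ) : hammingSphere ([] : List α) n (s + 1) = ∅ := by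
  simp [hammingSphere, hamming_nil_left]

theorem hammingSphere_length_zero_zero (u : List α) : hammingSphere u 0 0 = {[]} := by
  ext v
  simp +contextual [hammingSphere, hamming_nil_right]

theorem hammingSphere_length_zero_succ (u : List α) (s : ℕ) : hammingSphere u 0 (s + 1) = ∅ := by
  ext v
  simp +contextual [hammingSphere, hamming_nil_right]

theorem nil_notMem_hammingSphere_succ (u : List α) (n s : ℕ) : [] ∉ hammingSphere u (n + 1) s := by
  simp [hammingSphere]

theorem cons_self_preimage_hammingSphere (x : α) (u : List α) (n s : ℕ) :
    List.cons x ⁻¹' hammingSphere (x :: u) (n + 1) s = hammingSphere u n s := by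
  simp [hammingSphere, hamming_cons_cons_self]

theorem cons_preimage_hammingSphere_succ_of_ne {x y : α} (h : x ≠ y) (u : List α) (n s : ℕ) :
    List.cons y ⁻¹' hammingSphere (x :: u) (n + 1) (s + 1) = hammingSphere u n s := by
  simp [hammingSphere, hamming_cons_cons_of_ne h]

theorem hammingSphere_cons_zero (x : α) (u : List α) (n : ℕ) :
    hammingSphere (x :: u) (n + 1) 0 = List.cons x '' hammingSphere u n 0 := by
  ext v
  cases v with
  | nil => simp [hammingSphere]
  | cons y w =>
    by_cases h : x = y
    · subst h
      simp [hammingSphere, hamming_cons_cons_self]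
    · simp [hammingSphere, hamming_cons_cons_of_ne h, h]

theorem ncard_hammingSphere_cons_zero (x : α) (u : List α) (n : ℕ) :
    (hammingSphere (x :: u) (n + 1) 0).ncard = (hammingSphere u n 0).ncard := by
  rw [hammingSphere_cons_zero, Set.ncard_image_of_injective _ List.cons_injective]

theorem setOf_length_eq_and_d2_eq (u : List α) {j r : ℕ}
    (hr : (Nat.dist u.length j + 1) / 2 ≤ r) :
    {v : List α | v.length = j ∧ d2 u v = r} =
      hammingSphere u j (r - (Nat.dist u.length j + 1) / 2) := by
  ext v
  refine and_congr_right fun hv => ?_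
  rw [d2, hv, eq_tsub_iff_add_eq_of_le hr]

end Hamming

section Counting

variable {α : Type*} [Fintype α]

theorem ncard_setOf_length_eq (n : ℕ) :
    {v : List α | v.length = n}.ncard = Fintype.card α ^ n := by
  rw [← card_vector n, ← Nat.card_eq_fintype_card]
  rfl

theorem ncard_eq_sum_ncard_cons_preimage {S : Set (List α)} (hS : S.Finite) (hnil : [] ∉ S) :
    S.ncard = ∑ y, (List.cons y ⁻¹' S).ncard := by
  have hunion : S = ⋃ y, List.cons y '' (List.cons y ⁻¹' S) := by
    ext v
    cases v with
    | nil => simp [hnil]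
    | cons y w => simp
  have hfinite (y : α) : (List.cons y '' (List.cons y ⁻¹' S)).Finite :=
    hS.subset (Set.image_preimage_subset _ _)
  have hdisjoint : Pairwise fun y z : α =>
      Disjoint (List.cons y '' (List.cons y ⁻¹' S)) (List.cons z '' (List.cons z ⁻¹' S)) := by
    intro y z hyz
    rw [Set.disjoint_left]
    rintro _ ⟨v, -, rfl⟩ ⟨w, -, hw⟩
    exact hyz (List.cons.inj hw).1.symm
  calc S.ncard = (⋃ y, List.cons y '' (List.cons y ⁻¹' S)).ncard := congrArg Set.ncard hunion
    _ = ∑ y, (List.cons y '' (List.cons y ⁻¹' S)).ncard := by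
      rw [Set.ncard_iUnion_of_finite hfinite hdisjoint, finsum_eq_sum_of_fintype]
    _ = ∑ y, (List.cons y ⁻¹' S).ncard :=
      Finset.sum_congr rfl fun _ _ => Set.ncard_image_of_injective _ List.cons_injective

variable [DecidableEq α]

theorem ncard_hammingSphere_cons_succ (x : α) (u : List α) (n s : ℕ) :
    (hammingSphere (x :: u) (n + 1) (s + 1)).ncard =
      (hammingSphere u n (s + 1)).ncard +
        (Fintype.card α - 1) * (hammingSphere u n s).ncard := by
  have hmismatch : ∀ y ∈ ({x}ᶜ : Finset α),
      (List.cons y ⁻¹' hammingSphere (x :: u) (n + 1) (s + 1)).ncard =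
        (hammingSphere u n s).ncard := by
    intro y hy
    have hxy : x ≠ y := by simpa [eq_comm] using hy
    rw [cons_preimage_hammingSphere_succ_of_ne hxy]
  rw [ncard_eq_sum_ncard_cons_preimage (finite_hammingSphere _ _ _)
      (nil_notMem_hammingSphere_succ _ _ _),
    Fintype.sum_eq_add_sum_compl x, cons_self_preimage_hammingSphere,
    Finset.sum_congr rfl hmismatch, Finset.sum_const, Finset.card_compl,
    Finset.card_singleton, smul_eq_mul]

theorem ncard_hammingSphere (u : List α) (n s : ℕ) :
    (hammingSphere u n s).ncard =
      Nat.choose (min u.length n) s * (Fintype.card α - 1) ^ s *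
        Fintype.card α ^ (n - u.length) := by
  induction u generalizing n s with
  | nil =>
    cases s with
    | zero => simp [hammingSphere_nil_zero, ncard_setOf_length_eq]
    | succ s => simp [hammingSphere_nil_succ]
  | cons x u ih =>
    cases n with
    | zero =>
      cases s with
      | zero => simp [hammingSphere_length_zero_zero]
      | succ s => simp [hammingSphere_length_zero_succ]
    | succ n =>
      rw [List.length_cons, Nat.succ_min_succ, Nat.add_sub_add_right]
      cases s with
      | zero => simp [ncard_hammingSphere_cons_zero, ih]
      | succ s =>
        rw [ncard_hammingSphere_cons_succ, ih, ih, Nat.choose_succ_succ']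
        ring

end Counting

/-- For `j ≤ k` the truncated subtraction makes the last factor `1`: `v` has no free letters. -/
theorem stmt_8_general {A : Type*} [DecidableEq A] [Fintype A]
    (u : List A) (k r j a : ℕ) (hk : u.length = k)
    (ha : a = (Nat.dist k j + 1) / 2) (har : a ≤ r) :
    {v : List A | v.length = j ∧ d2 u v = r}.ncard =
      Nat.choose (min k j) (r - a) * (Fintype.card A - 1) ^ (r - a) *
        Fintype.card A ^ (j - k) := by
  subst hk ha
  rw [setOf_length_eq_and_d2_eq u har, ncard_hammingSphere]

theorem stmt_8 {A : Type*} [DecidableEq A] [Fintype A]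
    (u : List A) (k r j a : ℕ) (hk : u.length = k) (hj : k < j)
    (ha : a = (j - k + 1) / 2) (har : a ≤ r) :
    {v : List A | v.length = j ∧ d2 u v = r}.ncard =
      Nat.choose k (r - a) * (Fintype.card A - 1) ^ (r - a) *
        Fintype.card A ^ (j - k) := by
  rw [stmt_8_general u k r j a hk (by rwa [Nat.dist_eq_sub_of_le hj.le]) har, min_eq_left hj.le]
end

section
/- Let δ be an integer-valued Hamming compatible metric on Σ*, where |Σ| ≥ 2, and suppose δ is weakly uniform. Then δ(u,ε) ≥ l(u)/2 for every word u ∈ Σ*, i.e., 2·δ(u,ε) ≥ l(u). -/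
section HammingOpposite

variable {α R : Type*} [DecidableEq α]

/-- Two words are Hamming opposites if they have the same length and differ at every position. The
equality of lengths is required separately because `hamming` ignores the end of the longer word. -/
def HammingOpposite (u v : List α) : Prop :=
  u.length = v.length ∧ hamming u v = u.length

theorem hamming_map_eq_length_iff {f : α → α} {u : List α} :
    hamming u (u.map f) = u.length ↔ ∀ a ∈ u, a ≠ f a := by
  have zip_map_eq : u.zip (u.map f) = u.map fun a => (a, f a) := by
    simpa only [List.map_id, id] using List.zip_map' (f := id) (g := f) (l := u)
  simp [hamming, zip_map_eq]

theorem exists_hammingOpposite [Nontrivial α] (u : List α) : ∃ v, HammingOpposite u v := by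
  choose f hf using fun a : α => exists_ne a
  exact ⟨u.map f, List.length_map f |>.symm, hamming_map_eq_length_iff.mpr fun a _ => (hf a).symm⟩

theorem HammingOpposite.length_le_add [AddMonoidWithOne R] [Preorder R] {δ : List α → List α → R}
    (hsymm : ∀ u v, δ u v = δ v u)
    (htri : ∀ u v w, δ u v ≤ δ u w + δ w v)
    (hcompat : ∀ u v, u.length = v.length → δ u v = hamming u v)
    {u v : List α} (huv : HammingOpposite u v) (w : List α) :
    (u.length : R) ≤ δ u w + δ v w :=
  calc
    (u.length : R) = δ u v := by rw [hcompat u v huv.1, huv.2]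
    _ ≤ δ u w + δ w v := htri u v w
    _ = δ u w + δ v w := by rw [hsymm w v]

theorem stmt_10_general [Nontrivial α] [NonAssocSemiring R] [Preorder R]
    (δ : List α → List α → R)
    (hsymm : ∀ u v, δ u v = δ v u)
    (htri : ∀ u v w, δ u v ≤ δ u w + δ w v)
    (hcompat : ∀ u v, u.length = v.length → δ u v = hamming u v)
    (hwu : ∀ u v, HammingOpposite u v → δ u [] = δ v [])
    (u : List α) :
    (u.length : R) ≤ 2 * δ u [] := by
  obtain ⟨v, huv⟩ := exists_hammingOpposite u
  calc
    (u.length : R) ≤ δ u [] + δ v [] := huv.length_le_add hsymm htri hcompat []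
    _ = 2 * δ u [] := by rw [← hwu u v huv, two_mul]

end HammingOpposite

theorem stmt_10 {A : Type*} [DecidableEq A] [Fintype A]
    (hA : 2 ≤ Fintype.card A)
    (δ : List A → List A → ℕ)
    -- δ is a metric on Σ*
    (hrefl : ∀ u v : List A, δ u v = 0 ↔ u = v)
    (hsymm : ∀ u v : List A, δ u v = δ v u)
    (htri : ∀ u v w : List A, δ u v ≤ δ u w + δ w v)
    -- δ is Hamming compatible
    (hcompat : ∀ u v : List A, u.length = v.length → δ u v = hamming u v)
    -- δ is weakly uniform: Hamming opposites are equidistant from the empty word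
    (hwu : ∀ u v : List A, u.length = v.length → hamming u v = u.length →
      δ u [] = δ v []) :
    ∀ u : List A, u.length ≤ 2 * δ u [] := by
  have : Nontrivial A := Fintype.one_lt_card_iff_nontrivial.mp hA
  exact stmt_10_general δ hsymm htri hcompat fun u v huv => hwu u v huv.1 huv.2
end
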